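/- arXiv:1508.04589 — 2 statements merged into one kernel-verified Lean document; each statement's English description precedes it below -/
import Mathlib

section
/- Let Q ∈ (0,1) and α_Q(ξ) = ξ + Q/ξ. For every w on the unit circle 𝕋, (1/(2πi)) ∮_{|ξ|=1} [ ((1/ξ + Qξ) − (1/w + Qw)) / (α_Q(ξ) − α_Q(w)) ] · (1 − Q/ξ²) dξ = (Q² − 1)/w. (For ξ ∈ 𝕋 one has conj(α_Q(ξ)) = 1/ξ + Qξ, so the integrand is the ratio (conj α_Q(ξ) − conj α_Q(w))/(α_Q(ξ) − α_Q(w)) times α_Q′(ξ); it is bounded on 𝕋 with a removable singularity at ξ = w.) -/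
/-!
Let the numerator be the difference of the values of `A / ξ + B * ξ` at `ξ` and `w`; for the ellipse
`A = 1` and `B = Q`. Both differences in the quotient contain the factor `ξ - w`, and cancelling it
leaves `(B * ξ - A / w) / (ξ - a)`, with a simple pole at the point `a = Q / w` inside the circle.
Multiplying by `1 - Q / ξ ^ 2` only adds rational terms whose poles lie inside the circle and which
are `O(ξ⁻²)` at infinity, so that they integrate to zero. By Cauchy's formula the integral is
`2πi (B * a - A / w)`.
-/

open Metric Filter

section CauchyKernel

variable {c p q : ℂ} {R : ℝ}

theorem continuousOn_inv_sub_sphere (hp : p ∈ ball c R) :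
    ContinuousOn (fun z ↦ (z - p)⁻¹) (sphere c R) :=
  (continuousOn_id.sub continuousOn_const).inv₀ fun _ hz ↦
    sub_ne_zero.2 (sphere_disjoint_ball.ne_of_mem hz hp)

theorem circleIntegrable_const_mul_inv_sub_mul_inv_sub (k : ℂ) (hp : p ∈ ball c R)
    (hq : q ∈ ball c R) : CircleIntegrable (fun z ↦ k * ((z - p)⁻¹ * (z - q)⁻¹)) c R :=
  (continuousOn_const.mul ((continuousOn_inv_sub_sphere hp).mul
    (continuousOn_inv_sub_sphere hq))).circleIntegrable (pos_of_mem_ball hp).le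

theorem circleIntegral_inv_sub_mul_inv_sub (hp : p ∈ ball c R) (hq : q ∈ ball c R) :
    ∮ z in C(c, R), (z - p)⁻¹ * (z - q)⁻¹ = 0 := by
  have hR : 0 ≤ R := (pos_of_mem_ball hp).le
  rcases eq_or_ne p q with rfl | hpq
  · have sq_inv (z : ℂ) : (z - p)⁻¹ * (z - p)⁻¹ = (z - p) ^ (-2 : ℤ) := by
      rw [zpow_neg, zpow_ofNat, sq, mul_inv]
    simp only [sq_inv]
    exact circleIntegral.integral_sub_zpow_of_ne (by decide) c p R
  · have partial_fractions : Set.EqOn (fun z ↦ (z - p)⁻¹ * (z - q)⁻¹)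
        (fun z ↦ (p - q)⁻¹ * ((z - p)⁻¹ - (z - q)⁻¹)) (sphere c R) := fun z hz ↦ by
      have hzp : z - p ≠ 0 := sub_ne_zero.2 (sphere_disjoint_ball.ne_of_mem hz hp)
      have hzq : z - q ≠ 0 := sub_ne_zero.2 (sphere_disjoint_ball.ne_of_mem hz hq)
      have hpq' : p - q ≠ 0 := sub_ne_zero.2 hpq
      simp only
      field_simp
      ring
    rw [circleIntegral.integral_congr hR partial_fractions, circleIntegral.integral_const_mul,
      circleIntegral.integral_sub ((continuousOn_inv_sub_sphere hp).circleIntegrable hR)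
        ((continuousOn_inv_sub_sphere hq).circleIntegrable hR),
      circleIntegral.integral_sub_inv_of_mem_ball hp,
      circleIntegral.integral_sub_inv_of_mem_ball hq, sub_self, mul_zero]

theorem circleIntegral_sub_const_mul_inv_sub_mul_inv_sub {f : ℂ → ℂ} (hf : CircleIntegrable f c R)
    (k : ℂ) (hp : p ∈ ball c R) (hq : q ∈ ball c R) :
    ∮ z in C(c, R), (f z - k * ((z - p)⁻¹ * (z - q)⁻¹)) = ∮ z in C(c, R), f z := by
  rw [circleIntegral.integral_sub hf (circleIntegrable_const_mul_inv_sub_mul_inv_sub k hp hq),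
    circleIntegral.integral_const_mul, circleIntegral_inv_sub_mul_inv_sub hp hq, mul_zero, sub_zero]

theorem circleIntegral_inv_sub_mul_sub_inv_sub_mul_inv_sub {f : ℂ → ℂ}
    (hf : DifferentiableOn ℂ f (closedBall c R)) (k l : ℂ) (hp : p ∈ ball c R)
    (hq : q ∈ ball c R) :
    ∮ z in C(c, R), ((z - p)⁻¹ * f z - k * ((z - q)⁻¹ * (z - q)⁻¹) -
      l * ((z - q)⁻¹ * (z - p)⁻¹)) = 2 * Real.pi * Complex.I * f p := by
  have hg : CircleIntegrable (fun z ↦ (z - p)⁻¹ * f z) c R :=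
    ((continuousOn_inv_sub_sphere hp).mul
      (hf.continuousOn.mono sphere_subset_closedBall)).circleIntegrable (pos_of_mem_ball hp).le
  have hgk : CircleIntegrable (fun z ↦ (z - p)⁻¹ * f z - k * ((z - q)⁻¹ * (z - q)⁻¹)) c R :=
    hg.sub (circleIntegrable_const_mul_inv_sub_mul_inv_sub k hq hq)
  calc
    _ = ∮ z in C(c, R), ((z - p)⁻¹ * f z - k * ((z - q)⁻¹ * (z - q)⁻¹)) :=
      circleIntegral_sub_const_mul_inv_sub_mul_inv_sub hgk l hq hp
    _ = ∮ z in C(c, R), (z - p)⁻¹ * f z :=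
      circleIntegral_sub_const_mul_inv_sub_mul_inv_sub hg k hq hq
    _ = 2 * Real.pi * Complex.I * f p := hf.circleIntegral_sub_inv_smul hp

end CauchyKernel

theorem joukowski_quotient_mul_deriv_eq {A B Q w ξ : ℂ} (hw : w ≠ 0) (hξ : ξ ≠ 0) (hξw : ξ ≠ w)
    (hξa : ξ ≠ Q / w) :
    ((A / ξ + B * ξ) - (A / w + B * w)) / ((ξ + Q / ξ) - (w + Q / w)) * (1 - Q / ξ ^ 2) =
      (ξ - Q / w)⁻¹ * (B * ξ - A / w) - A * (ξ⁻¹ * ξ⁻¹) -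
        (B * Q - A) * (ξ⁻¹ * (ξ - Q / w)⁻¹) := by
  have hξw' : ξ - w ≠ 0 := sub_ne_zero.2 hξw
  have hξa' : ξ - Q / w ≠ 0 := sub_ne_zero.2 hξa
  have numerator : (A / ξ + B * ξ) - (A / w + B * w) = (ξ - w) * (B * ξ - A / w) / ξ := by
    field_simp
    ring
  have denominator : (ξ + Q / ξ) - (w + Q / w) = (ξ - w) * (ξ - Q / w) / ξ := by
    field_simp
    ring
  rw [numerator, denominator, div_div_div_cancel_right₀ hξ, mul_div_mul_left _ _ hξw']
  obtain ⟨a, rfl⟩ : ∃ a, Q = a * w := ⟨Q / w, (div_mul_cancel₀ Q hw).symm⟩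
  rw [mul_div_cancel_right₀ a hw] at hξa' ⊢
  field_simp
  ring

/-- For `A = R ^ 2` and `B = conj Q / R ^ 2` the numerator is the complex conjugate of the
denominator when `ξ` and `w` both lie on the circle. -/
theorem ellipse_selfinteraction_integral_general {A B Q w : ℂ} {R : ℝ} (hQ : ‖Q‖ < R * ‖w‖) :
    (∮ ξ in C(0, R),
        ((A / ξ + B * ξ) - (A / w + B * w)) / ((ξ + Q / ξ) - (w + Q / w)) * (1 - Q / ξ ^ 2))
      / (2 * Real.pi * Complex.I) = (B * Q - A) / w := by
  have hw : w ≠ 0 := by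
    rintro rfl
    simp [(norm_nonneg Q).not_gt] at hQ
  have ha : Q / w ∈ ball (0 : ℂ) R := by
    rwa [mem_ball_zero_iff, norm_div, div_lt_iff₀ (norm_pos_iff.2 hw)]
  have hR : 0 < R := pos_of_mem_ball ha
  have h0 : (0 : ℂ) ∈ ball (0 : ℂ) R := mem_ball_self hR
  have integral_eq : ∮ ξ in C(0, R), ((ξ - Q / w)⁻¹ * (B * ξ - A / w) - A * (ξ⁻¹ * ξ⁻¹) -
      (B * Q - A) * (ξ⁻¹ * (ξ - Q / w)⁻¹)) =
        2 * Real.pi * Complex.I * (B * (Q / w) - A / w) := by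
    simpa only [sub_zero] using circleIntegral_inv_sub_mul_sub_inv_sub_mul_inv_sub
      (f := fun ξ ↦ B * ξ - A / w) (by fun_prop) A (B * Q - A) ha h0
  have integrand_eq : (fun ξ ↦ ((A / ξ + B * ξ) - (A / w + B * w)) /
        ((ξ + Q / ξ) - (w + Q / w)) * (1 - Q / ξ ^ 2)) =ᶠ[codiscreteWithin (sphere 0 |R|)]
      fun ξ ↦ (ξ - Q / w)⁻¹ * (B * ξ - A / w) - A * (ξ⁻¹ * ξ⁻¹) -
        (B * Q - A) * (ξ⁻¹ * (ξ - Q / w)⁻¹) := by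
    rw [abs_of_pos hR]
    -- At `ξ = w` the quotient is `0 / 0 = 0`, so the point `w` has to be left out.
    filter_upwards [compl_singleton_mem_codiscreteWithin w, self_mem_codiscreteWithin _]
      with ξ hξw hξ
    exact joukowski_quotient_mul_deriv_eq hw (sphere_disjoint_ball.ne_of_mem hξ h0)
      hξw (sphere_disjoint_ball.ne_of_mem hξ ha)
  rw [circleIntegral.circleIntegral_congr_codiscreteWithin integrand_eq hR.ne', integral_eq,
    mul_div_cancel_left₀ _ Complex.two_pi_I_ne_zero]
  ring

/-- Residue computation for the ellipse: for `Q ∈ (0,1)` and `w` on the unit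
circle, `(1/2πi) ∮_{|ξ|=1} ((conj α_Q(ξ) - conj α_Q(w))/(α_Q(ξ) - α_Q(w))) α_Q'(ξ) dξ
= (Q² - 1)/w`, where on the circle `conj α_Q(ξ) = 1/ξ + Qξ` and
`α_Q(ξ) = ξ + Q/ξ`, `α_Q'(ξ) = 1 - Q/ξ²`. -/
theorem ellipse_selfinteraction_integral (Q : ℝ) (hQ : Q ∈ Set.Ioo (0:ℝ) 1)
    (w : ℂ) (hw : ‖w‖ = 1) :
    (∮ ξ in C(0, 1),
        ((1 / ξ + (Q : ℂ) * ξ) - (1 / w + (Q : ℂ) * w)) /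
          ((ξ + (Q : ℂ) / ξ) - (w + (Q : ℂ) / w)) * (1 - (Q : ℂ) / ξ ^ 2))
      / (2 * Real.pi * Complex.I) = ((Q : ℂ) ^ 2 - 1) / w := by
  rw [sq]
  exact ellipse_selfinteraction_integral_general (by simpa [hw, abs_of_pos hQ.1] using hQ.2)
end

section
/- Let Q ∈ (0,1) and let (a_n)_{n≥2} be a sequence of real numbers with Σ_{n≥2} n|a_n| < ∞, and define h(w) = Σ_{n≥2} a_n wⁿ for w ∈ 𝕋. Define, for w ∈ 𝕋, M_Q h(w) = ((1−Q²)/2)(1 − Qw²)h′(w) + (Q² − 1)·(1/w)·h(w) + ((1+Q²)/2)(w − Q/w)·conj(h(w)) + (w/Q − Q²/w)·h(Q/w). Then for every w ∈ 𝕋, Im(M_Q h(w)) = −((1+Q)²/2)·a₂·Im(w) − 2Q²·a₃·Im(w²) + Σ_{n≥3} ( ((1−Q²)/2)n − 1 − Qⁿ )·(a_{n+1} − Q a_{n−1})·Im(wⁿ). -/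
/-!
On the unit circle `conj w = w⁻¹`, so the operator sends `w ^ (m + 1)` to a real combination of
`w ^ m`, `w ^ (m + 2)` and their inverses. Since `Im (w⁻¹ ^ n) = -Im (w ^ n)`, the coefficients pair
up, and the same multiplier `μ n = (1 - Q²) / 2 * n - 1 - Q ^ n` governs both surviving frequencies:
the image has imaginary part `μ m * Im (w ^ m) - Q * μ (m + 2) * Im (w ^ (m + 2))`. Summing against
`a (m + 1)` and collecting equal frequencies gives the coefficient
`μ n * (a (n + 1) - Q * a (n - 1))` of `Im (w ^ n)` for every `n ≥ 1`. The first two terms of the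
expansion are no exception: `μ 1 = -(1 + Q)² / 2` and `μ 2 = -2 * Q²`.
-/

/-- The linearized operator `M_Q` at the point `w`, as a function of the values `d = h'(w)`,
`v = h(w)` and `u = h(Q / w)`. These are separate arguments because on the unit circle `h'` is
the termwise derivative of the Fourier series of `h`. -/
noncomputable def linearizedOperator (Q : ℝ) (w d v u : ℂ) : ℂ :=
  (1 - (Q : ℂ) ^ 2) / 2 * (1 - (Q : ℂ) * w ^ 2) * d
    + ((Q : ℂ) ^ 2 - 1) * (1 / w) * v
    + (1 + (Q : ℂ) ^ 2) / 2 * (w - (Q : ℂ) / w) * starRingEnd ℂ v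
    + (w / (Q : ℂ) - (Q : ℂ) ^ 2 / w) * u

/-- The Fourier multiplier of the linearized operator at frequency `n`. -/
noncomputable def fourierMultiplier (Q : ℝ) (n : ℕ) : ℝ :=
  (1 - Q ^ 2) / 2 * n - 1 - Q ^ n

section Summability

theorem summable_of_summable_natCast_mul_norm {E : Type*} [NormedAddCommGroup E] [CompleteSpace E]
    {f : ℕ → E} (hf : Summable fun n : ℕ => (n : ℝ) * ‖f n‖) : Summable f := by
  refine .of_norm_bounded_eventually_nat hf ?_
  filter_upwards [Filter.eventually_ge_atTop 1] with n hn
  exact le_mul_of_one_le_left (norm_nonneg _) (by exact_mod_cast hn)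

theorem summable_mul_of_abs_le_one {ι : Type*} {f g : ι → ℝ} (hf : Summable f)
    (hg : ∀ i, |g i| ≤ 1) : Summable fun i => f i * g i := by
  refine .of_norm_bounded hf.abs fun i => ?_
  rw [Real.norm_eq_abs, abs_mul]
  exact mul_le_of_le_one_right (abs_nonneg _) (hg i)

theorem summable_mul_pow_of_abs_le_one {f : ℕ → ℝ} {Q : ℝ} (hf : Summable f) (hQ : |Q| ≤ 1) :
    Summable fun n => f n * Q ^ n :=
  summable_mul_of_abs_le_one hf fun n => by
    rw [abs_pow]
    exact pow_le_one₀ (abs_nonneg _) hQ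

theorem hasSum_mul_sub_shift {R : Type*} [CommRing R] [TopologicalSpace R] [IsTopologicalRing R]
    [T2Space R] {a m : ℕ → R} (ha0 : a 0 = 0) (hm0 : m 0 = 0)
    (hdown : Summable fun n => a (n + 1) * m n) (hup : Summable fun n => a n * m (n + 1)) (c : R) :
    HasSum (fun n => (a (n + 2) - c * a n) * m (n + 1))
      (∑' n, a (n + 1) * (m n - c * m (n + 2))) := by
  have hdown' : HasSum (fun n => a (n + 2) * m (n + 1)) (∑' n, a (n + 1) * m n) := by
    simpa [hm0] using (hasSum_nat_add_iff' 1).mpr hdown.hasSum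
  have hup' : HasSum (fun n => a (n + 1) * m (n + 2)) (∑' n, a n * m (n + 1)) := by
    simpa [ha0] using (hasSum_nat_add_iff' 1).mpr hup.hasSum
  have hvalue : ∑' n, a (n + 1) * (m n - c * m (n + 2))
      = ∑' n, a (n + 1) * m n - c * ∑' n, a n * m (n + 1) := by
    rw [← (hdown.hasSum.sub (hup'.mul_left c)).tsum_eq]
    exact tsum_congr fun n => by ring
  rw [hvalue]
  exact (hdown'.sub (hup.hasSum.mul_left c)).congr_fun fun n => by ring

end Summability

section UnitCircle

variable {w : ℂ}

theorem im_inv_pow_of_norm_eq_one (hw : ‖w‖ = 1) (n : ℕ) : (w⁻¹ ^ n).im = -(w ^ n).im := by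
  rw [Complex.inv_eq_conj hw, ← map_pow, Complex.conj_im]

theorem abs_im_pow_le_one (hw : ‖w‖ = 1) (n : ℕ) : |(w ^ n).im| ≤ 1 :=
  (Complex.abs_im_le_norm _).trans (by rw [norm_pow, hw, one_pow])

end UnitCircle

section Multiplier

variable {Q : ℝ} {a : ℕ → ℝ}

theorem summable_mul_affine_add_pow (hn : Summable fun n : ℕ => (n : ℝ) * a n) (ha : Summable a)
    (haQ : Summable fun n => a n * Q ^ n) (α β γ : ℝ) :
    Summable fun n : ℕ => a n * (α * n + β + γ * Q ^ n) :=
  (((hn.mul_left α).add (ha.mul_left β)).add (haQ.mul_left γ)).congr fun n => by ring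

theorem summable_succ_mul_fourierMultiplier (hQ : Q ≠ 0)
    (hn : Summable fun n : ℕ => (n : ℝ) * a n) (ha : Summable a)
    (haQ : Summable fun n => a n * Q ^ n) :
    Summable fun n => a (n + 1) * fourierMultiplier Q n := by
  have hshift := (summable_nat_add_iff 1).mpr
    (summable_mul_affine_add_pow hn ha haQ ((1 - Q ^ 2) / 2) (-((1 - Q ^ 2) / 2) - 1) (-Q⁻¹))
  refine hshift.congr fun n => ?_
  rw [fourierMultiplier, pow_succ]
  push_cast
  field_simp
  ring

theorem summable_mul_fourierMultiplier_succ (hn : Summable fun n : ℕ => (n : ℝ) * a n)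
    (ha : Summable a) (haQ : Summable fun n => a n * Q ^ n) :
    Summable fun n => a n * fourierMultiplier Q (n + 1) := by
  refine (summable_mul_affine_add_pow hn ha haQ
    ((1 - Q ^ 2) / 2) ((1 - Q ^ 2) / 2 - 1) (-Q)).congr fun n => ?_
  rw [fourierMultiplier]
  push_cast
  ring

end Multiplier

section Operator

variable {Q : ℝ} {w : ℂ}

theorem linearizedOperator_ofReal_mul (r : ℝ) (d v u : ℂ) :
    linearizedOperator Q w (r * d) (r * v) (r * u) = r * linearizedOperator Q w d v u := by
  simp only [linearizedOperator, map_mul, Complex.conj_ofReal]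
  ring

theorem hasSum_linearizedOperator {ι : Type*} {d v u : ι → ℂ} {D V U : ℂ}
    (hd : HasSum d D) (hv : HasSum v V) (hu : HasSum u U) :
    HasSum (fun i => linearizedOperator Q w (d i) (v i) (u i)) (linearizedOperator Q w D V U) :=
  (((hd.mul_left _).add (hv.mul_left _)).add (hv.star.mul_left _)).add (hu.mul_left _)

theorem linearizedOperator_monomial (hQ : Q ≠ 0) (hw : ‖w‖ = 1) (m : ℕ) :
    linearizedOperator Q w ((m + 1 : ℕ) * w ^ m) (w ^ (m + 1)) ((Q / w) ^ (m + 1))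
      = (((1 - Q ^ 2) / 2 * (m + 1) + (Q ^ 2 - 1) : ℝ) : ℂ) * w ^ m
        + ((-(Q * ((1 - Q ^ 2) / 2 * (m + 1))) : ℝ) : ℂ) * w ^ (m + 2)
        + (((1 + Q ^ 2) / 2 + Q ^ m : ℝ) : ℂ) * w⁻¹ ^ m
        + ((-(Q * ((1 + Q ^ 2) / 2 + Q ^ (m + 2))) : ℝ) : ℂ) * w⁻¹ ^ (m + 2) := by
  have hw0 : w ≠ 0 := norm_ne_zero_iff.mp (hw ▸ one_ne_zero)
  have hQ0 : (Q : ℂ) ≠ 0 := Complex.ofReal_ne_zero.mpr hQ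
  rw [linearizedOperator, map_pow, ← Complex.inv_eq_conj hw]
  push_cast
  simp only [inv_pow, div_pow]
  field_simp
  ring

theorem im_linearizedOperator_monomial (hQ : Q ≠ 0) (hw : ‖w‖ = 1) (m : ℕ) :
    (linearizedOperator Q w ((m + 1 : ℕ) * w ^ m) (w ^ (m + 1)) ((Q / w) ^ (m + 1))).im
      = fourierMultiplier Q m * (w ^ m).im
        - Q * (fourierMultiplier Q (m + 2) * (w ^ (m + 2)).im) := by
  rw [linearizedOperator_monomial hQ hw]
  simp only [Complex.add_im, Complex.im_ofReal_mul, im_inv_pow_of_norm_eq_one hw,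
    fourierMultiplier]
  push_cast
  ring

end Operator

section Expansion

variable {Q : ℝ} {w : ℂ} {a : ℕ → ℝ}

theorem hasSum_im_linearizedOperator_monomials (hQ : Q ≠ 0) (ha0 : a 0 = 0)
    (hsum : Summable fun n : ℕ => (n : ℝ) * |a n|) (haQ : Summable fun n => a n * Q ^ n)
    (hw : ‖w‖ = 1) :
    HasSum (fun n => a (n + 1) * (fourierMultiplier Q n * (w ^ n).im
        - Q * (fourierMultiplier Q (n + 2) * (w ^ (n + 2)).im)))
      (linearizedOperator Q w (∑' n : ℕ, (n : ℂ) * (a n : ℂ) * w ^ (n - 1))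
        (∑' n : ℕ, (a n : ℂ) * w ^ n) (∑' n : ℕ, (a n : ℂ) * ((Q : ℂ) / w) ^ n)).im := by
  have ha : Summable a := summable_of_summable_natCast_mul_norm hsum
  have hderiv : Summable fun n : ℕ => (n : ℂ) * (a n : ℂ) * w ^ (n - 1) :=
    .of_norm_bounded hsum fun n => by simp [hw]
  have hvalue : Summable fun n : ℕ => (a n : ℂ) * w ^ n :=
    .of_norm_bounded ha.abs fun n => by simp [hw]
  have hinner : Summable fun n : ℕ => (a n : ℂ) * ((Q : ℂ) / w) ^ n :=
    .of_norm_bounded haQ.abs fun n => by simp [hw, abs_mul]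
  have hseries := (hasSum_nat_add_iff' 1).mpr (Complex.hasSum_im
    (hasSum_linearizedOperator (Q := Q) (w := w) hderiv.hasSum hvalue.hasSum hinner.hasSum))
  have hzero : linearizedOperator Q w 0 0 0 = 0 := by simp [linearizedOperator]
  simp only [Finset.sum_range_one, ha0, Complex.ofReal_zero, mul_zero, zero_mul, hzero,
    Complex.zero_im, sub_zero] at hseries
  refine hseries.congr_fun fun n => ?_
  rw [← im_linearizedOperator_monomial hQ hw, ← Complex.im_ofReal_mul,
    ← linearizedOperator_ofReal_mul, Nat.add_sub_cancel, mul_left_comm, mul_assoc]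

theorem hasSum_im_linearizedOperator (hQ : Q ≠ 0) (ha0 : a 0 = 0)
    (hsum : Summable fun n : ℕ => (n : ℝ) * |a n|) (haQ : Summable fun n => a n * Q ^ n)
    (hw : ‖w‖ = 1) :
    HasSum (fun n => fourierMultiplier Q (n + 1) * (a (n + 2) - Q * a n) * (w ^ (n + 1)).im)
      (linearizedOperator Q w (∑' n : ℕ, (n : ℂ) * (a n : ℂ) * w ^ (n - 1))
        (∑' n : ℕ, (a n : ℂ) * w ^ n) (∑' n : ℕ, (a n : ℂ) * ((Q : ℂ) / w) ^ n)).im := by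
  have ha : Summable a := summable_of_summable_natCast_mul_norm hsum
  have hn : Summable fun n : ℕ => (n : ℝ) * a n :=
    .of_norm_bounded hsum fun n => by simp
  have hdown : Summable fun n => a (n + 1) * (fourierMultiplier Q n * (w ^ n).im) :=
    (summable_mul_of_abs_le_one (summable_succ_mul_fourierMultiplier hQ hn ha haQ)
      fun n => abs_im_pow_le_one hw n).congr fun n => mul_assoc _ _ _
  have hup : Summable fun n => a n * (fourierMultiplier Q (n + 1) * (w ^ (n + 1)).im) :=
    (summable_mul_of_abs_le_one (summable_mul_fourierMultiplier_succ hn ha haQ)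
      fun n => abs_im_pow_le_one hw (n + 1)).congr fun n => mul_assoc _ _ _
  rw [← (hasSum_im_linearizedOperator_monomials hQ ha0 hsum haQ hw).tsum_eq]
  exact (hasSum_mul_sub_shift (m := fun n => fourierMultiplier Q n * (w ^ n).im) ha0 (by simp)
    hdown hup Q).congr_fun fun n => by ring

theorem linearized_operator_fourier_expansion_general (hQ : Q ≠ 0) (ha0 : a 0 = 0)
    (hsum : Summable fun n : ℕ => (n : ℝ) * |a n|) (haQ : Summable fun n => a n * Q ^ n)
    (hw : ‖w‖ = 1) :
    (linearizedOperator Q w (∑' n : ℕ, (n : ℂ) * (a n : ℂ) * w ^ (n - 1))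
        (∑' n : ℕ, (a n : ℂ) * w ^ n) (∑' n : ℕ, (a n : ℂ) * ((Q : ℂ) / w) ^ n)).im
      = -((1 + Q) ^ 2 / 2) * a 2 * w.im - 2 * Q ^ 2 * (a 3 - Q * a 1) * (w ^ 2).im
        + ∑' k : ℕ, ((1 - Q ^ 2) / 2 * ((k : ℝ) + 3) - 1 - Q ^ (k + 3)) *
            (a (k + 4) - Q * a (k + 2)) * (w ^ (k + 3)).im := by
  have hexpansion := hasSum_im_linearizedOperator hQ ha0 hsum haQ hw
  rw [← hexpansion.tsum_eq, ← hexpansion.summable.sum_add_tsum_nat_add 2]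
  have hμ1 : fourierMultiplier Q 1 = -((1 + Q) ^ 2 / 2) := by
    rw [fourierMultiplier]; push_cast; ring
  have hμ2 : fourierMultiplier Q 2 = -(2 * Q ^ 2) := by
    rw [fourierMultiplier]; push_cast; ring
  have hhead : ∑ n ∈ Finset.range 2,
      fourierMultiplier Q (n + 1) * (a (n + 2) - Q * a n) * (w ^ (n + 1)).im
        = -((1 + Q) ^ 2 / 2) * a 2 * w.im - 2 * Q ^ 2 * (a 3 - Q * a 1) * (w ^ 2).im := by
    simp only [Finset.sum_range_succ, Finset.sum_range_zero, zero_add, Nat.reduceAdd, pow_one,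
      hμ1, hμ2, ha0]
    ring
  rw [hhead]
  congr 1
  refine tsum_congr fun k => ?_
  rw [fourierMultiplier]
  push_cast
  ring

end Expansion

/-- Fourier expansion of the linearized operator at the ellipse: for
`Q ∈ (0,1)`, a real sequence `(a_n)_{n≥2}` with `Σ n|a_n| < ∞`,
`h(w) = Σ_{n≥2} a_n wⁿ` and `w` on the unit circle,
`Im(M_Q h(w)) = -((1+Q)²/2)a₂ Im(w) - 2Q²a₃ Im(w²)
  + Σ_{n≥3} (((1-Q²)/2)n - 1 - Qⁿ)(a_{n+1} - Q a_{n-1}) Im(wⁿ)`,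
where `M_Q h(w) = ((1-Q²)/2)(1 - Qw²)h'(w) + (Q² - 1)(1/w)h(w)
  + ((1+Q²)/2)(w - Q/w) conj(h(w)) + (w/Q - Q²/w) h(Q/w)`. -/
theorem linearized_operator_fourier_expansion (Q : ℝ) (hQ : Q ∈ Set.Ioo (0:ℝ) 1)
    (a : ℕ → ℝ) (ha0 : a 0 = 0) (ha1 : a 1 = 0)
    (hsum : Summable fun n : ℕ => (n : ℝ) * |a n|)
    (w : ℂ) (hw : ‖w‖ = 1) :
    ((1 - (Q : ℂ) ^ 2) / 2 * (1 - (Q : ℂ) * w ^ 2) *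
          (∑' n : ℕ, (n : ℂ) * (a n : ℂ) * w ^ (n - 1))
        + ((Q : ℂ) ^ 2 - 1) * (1 / w) * (∑' n : ℕ, (a n : ℂ) * w ^ n)
        + (1 + (Q : ℂ) ^ 2) / 2 * (w - (Q : ℂ) / w) *
            starRingEnd ℂ (∑' n : ℕ, (a n : ℂ) * w ^ n)
        + (w / (Q : ℂ) - (Q : ℂ) ^ 2 / w) *
            (∑' n : ℕ, (a n : ℂ) * ((Q : ℂ) / w) ^ n)).im
    = -((1 + Q) ^ 2 / 2) * a 2 * w.im - 2 * Q ^ 2 * a 3 * (w ^ 2).im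
      + ∑' k : ℕ, ((1 - Q ^ 2) / 2 * ((k : ℝ) + 3) - 1 - Q ^ (k + 3)) *
          (a (k + 4) - Q * a (k + 2)) * (w ^ (k + 3)).im := by
  have haQ := summable_mul_pow_of_abs_le_one (summable_of_summable_natCast_mul_norm hsum)
    ((abs_of_pos hQ.1).trans_le hQ.2.le)
  simpa only [linearizedOperator, ha1, mul_zero, sub_zero] using
    linearized_operator_fourier_expansion_general hQ.1.ne' ha0 hsum haQ hw
end
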